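/- arXiv:1703.08982 — 5 statements merged into one kernel-verified Lean document; each statement's English description precedes it below -/
import Mathlib

section
/- Let Π be a datalogMTL program and D a data instance such that (Π, D) is consistent. Then there exists a model C of (Π, D) (whose domain is the set of constants occurring in Π or D, under the standard name assumption) which is minimal in the following sense: for every model M of (Π, D), every predicate P occurring in Π or D, every tuple c̄ of constants from Π or D of matching arity, and every t ∈ ℝ, if C, t ⊨ P(c̄) then M, t ⊨ P(c̄). -/
namespace DatalogMTL

/-- A dyadic rational: a real number of the form `a / 2 ^ m` with `a : ℤ`, `m : ℕ`. -/
def IsDyadicR (x : ℝ) : Prop := ∃ (a : ℤ) (m : ℕ), x = (a : ℝ) / 2 ^ m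

/-- An extended real which is `±∞` or a dyadic rational. -/
def IsDyadicE (x : EReal) : Prop :=
  x = ⊥ ∨ x = ⊤ ∨ ∃ y : ℝ, IsDyadicR y ∧ x = (y : EReal)

/-- An interval of the real line, possibly unbounded, given by its two (extended-real)
endpoints and two flags recording whether each endpoint is included. -/
structure RIntv where
  lo : EReal
  hi : EReal
  loClosed : Bool
  hiClosed : Bool

namespace RIntv

/-- The set of reals belonging to the interval. -/
def toSet (ι : RIntv) : Set ℝ :=
  {t : ℝ | (if ι.loClosed then ι.lo ≤ (t : EReal) else ι.lo < (t : EReal)) ∧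
           (if ι.hiClosed then (t : EReal) ≤ ι.hi else (t : EReal) < ι.hi)}

/-- Both endpoints are dyadic rationals or infinite. -/
def Dyadic (ι : RIntv) : Prop := IsDyadicE ι.lo ∧ IsDyadicE ι.hi

/-- `ι` is a legitimate interval: nonempty, with dyadic (or infinite) endpoints. -/
def IsIntv (ι : RIntv) : Prop := ι.Dyadic ∧ ι.toSet.Nonempty

/-- `ι` is a range: a (nonempty, dyadic) interval with nonnegative endpoints. -/
def IsRange (ι : RIntv) : Prop := ι.IsIntv ∧ (0 : EReal) ≤ ι.lo

/-- The finite numbers occurring as endpoints of `ι`. -/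
def nums (ι : RIntv) : Set ℝ := {x : ℝ | ι.lo = (x : EReal) ∨ ι.hi = (x : EReal)}

/-- The closed interval `[a, b]`. -/
def icc (a b : ℝ) : RIntv := ⟨(a : EReal), (b : EReal), true, true⟩
/-- The half-open interval `[a, b)`. -/
def ico (a b : ℝ) : RIntv := ⟨(a : EReal), (b : EReal), true, false⟩
/-- The open interval `(a, b)`. -/
def ioo (a b : ℝ) : RIntv := ⟨(a : EReal), (b : EReal), false, false⟩

end RIntv

/-- An individual term: a variable or a constant. -/
inductive Term (V C : Type) where
  | var : V → Term V C
  | const : C → Term V C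

/-- Atoms of datalogMTL, over variables `V`, constants `C` and
predicate symbols `P` with arity function `ar`. -/
inductive Atom (V C P : Type) (ar : P → ℕ) : Type where
  | pred (p : P) (args : Fin (ar p) → Term V C)
  | top
  | neq (t t' : Term V C)
  | boxPlus (ρ : RIntv) (A : Atom V C P ar)
  | boxMinus (ρ : RIntv) (A : Atom V C P ar)
  | diaPlus (ρ : RIntv) (A : Atom V C P ar)
  | diaMinus (ρ : RIntv) (A : Atom V C P ar)
  | untl (ρ : RIntv) (A B : Atom V C P ar)
  | sinc (ρ : RIntv) (A B : Atom V C P ar)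

variable {V C P : Type} {ar : P → ℕ}

/-- The predicate symbol `p` occurs in the atom. -/
def Atom.mentionsPred : Atom V C P ar → P → Prop
  | .pred q _, p => q = p
  | .top, _ => False
  | .neq _ _, _ => False
  | .boxPlus _ A, p => A.mentionsPred p
  | .boxMinus _ A, p => A.mentionsPred p
  | .diaPlus _ A, p => A.mentionsPred p
  | .diaMinus _ A, p => A.mentionsPred p
  | .untl _ A B, p => A.mentionsPred p ∨ B.mentionsPred p
  | .sinc _ A B, p => A.mentionsPred p ∨ B.mentionsPred p

/-- The constants occurring in a term. -/
def Term.consts : Term V C → Set C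
  | .var _ => ∅
  | .const c => {c}

/-- The constants occurring in an atom. -/
def Atom.consts : Atom V C P ar → Set C
  | .pred _ args => {c : C | ∃ i, args i = Term.const c}
  | .top => ∅
  | .neq t t' => t.consts ∪ t'.consts
  | .boxPlus _ A => A.consts
  | .boxMinus _ A => A.consts
  | .diaPlus _ A => A.consts
  | .diaMinus _ A => A.consts
  | .untl _ A B => A.consts ∪ B.consts
  | .sinc _ A B => A.consts ∪ B.consts

/-- The variables occurring in an atom. -/
def Atom.vars : Atom V C P ar → Set V
  | .pred _ args => {v : V | ∃ i, args i = Term.var v}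
  | .top => ∅
  | .neq t t' => {v : V | t = Term.var v ∨ t' = Term.var v}
  | .boxPlus _ A => A.vars
  | .boxMinus _ A => A.vars
  | .diaPlus _ A => A.vars
  | .diaMinus _ A => A.vars
  | .untl _ A B => A.vars ∪ B.vars
  | .sinc _ A B => A.vars ∪ B.vars

/-- The atom is admissible as the head of a rule: it contains no
`◇⁺`, `◇⁻`, `U`, `S`. -/
def Atom.HeadOK : Atom V C P ar → Prop
  | .pred _ _ => True
  | .top => True
  | .neq _ _ => True
  | .boxPlus _ A => A.HeadOK
  | .boxMinus _ A => A.HeadOK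
  | .diaPlus _ _ => False
  | .diaMinus _ _ => False
  | .untl _ _ _ => False
  | .sinc _ _ _ => False

/-- All intervals constraining temporal operators in the atom are genuine ranges. -/
def Atom.RangesOK : Atom V C P ar → Prop
  | .pred _ _ => True
  | .top => True
  | .neq _ _ => True
  | .boxPlus ρ A => ρ.IsRange ∧ A.RangesOK
  | .boxMinus ρ A => ρ.IsRange ∧ A.RangesOK
  | .diaPlus ρ A => ρ.IsRange ∧ A.RangesOK
  | .diaMinus ρ A => ρ.IsRange ∧ A.RangesOK
  | .untl ρ A B => ρ.IsRange ∧ A.RangesOK ∧ B.RangesOK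
  | .sinc ρ A B => ρ.IsRange ∧ A.RangesOK ∧ B.RangesOK

/-- The finite numbers occurring as endpoints of ranges in the atom. -/
def Atom.nums : Atom V C P ar → Set ℝ
  | .pred _ _ => ∅
  | .top => ∅
  | .neq _ _ => ∅
  | .boxPlus ρ A => ρ.nums ∪ A.nums
  | .boxMinus ρ A => ρ.nums ∪ A.nums
  | .diaPlus ρ A => ρ.nums ∪ A.nums
  | .diaMinus ρ A => ρ.nums ∪ A.nums
  | .untl ρ A B => ρ.nums ∪ A.nums ∪ B.nums
  | .sinc ρ A B => ρ.nums ∪ A.nums ∪ B.nums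

/-- A rule `head ← body`; `head = none` encodes `⊥`. -/
structure Rule (V C P : Type) (ar : P → ℕ) where
  head : Option (Atom V C P ar)
  body : List (Atom V C P ar)

/-- Well-formedness of a rule: nonempty body, proper ranges everywhere, the head
contains no diamond/until/since operators, and every head variable occurs in the body. -/
def Rule.WF (r : Rule V C P ar) : Prop :=
  r.body ≠ [] ∧ (∀ A ∈ r.body, A.RangesOK) ∧
    ∀ A, r.head = some A →
      A.HeadOK ∧ A.RangesOK ∧ ∀ v ∈ A.vars, ∃ B ∈ r.body, v ∈ B.vars

def Rule.mentionsPred (r : Rule V C P ar) (p : P) : Prop :=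
  (∃ A ∈ r.body, A.mentionsPred p) ∨ (∃ A, r.head = some A ∧ A.mentionsPred p)

def Rule.consts (r : Rule V C P ar) : Set C :=
  {c : C | (∃ A ∈ r.body, c ∈ A.consts) ∨ (∃ A, r.head = some A ∧ c ∈ A.consts)}

def Rule.nums (r : Rule V C P ar) : Set ℝ :=
  {x : ℝ | (∃ A ∈ r.body, x ∈ A.nums) ∨ (∃ A, r.head = some A ∧ x ∈ A.nums)}

/-- A datalogMTL program: a finite set (list) of rules. -/
structure Program (V C P : Type) (ar : P → ℕ) where
  rules : List (Rule V C P ar)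

def Program.WF (Pr : Program V C P ar) : Prop := ∀ r ∈ Pr.rules, r.WF

def Program.MentionsPred (Pr : Program V C P ar) (p : P) : Prop :=
  ∃ r ∈ Pr.rules, r.mentionsPred p

def Program.consts (Pr : Program V C P ar) : Set C := {c : C | ∃ r ∈ Pr.rules, c ∈ r.consts}

def Program.nums (Pr : Program V C P ar) : Set ℝ := {x : ℝ | ∃ r ∈ Pr.rules, x ∈ r.nums}

/-- The dependence relation `p ⋖ q`: some rule of `Pr` has `p` in its head
and `q` in its body. -/
def Program.DependsOn (Pr : Program V C P ar) (p q : P) : Prop :=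
  ∃ r ∈ Pr.rules, (∃ A, r.head = some A ∧ A.mentionsPred p) ∧ (∃ B ∈ r.body, B.mentionsPred q)

/-- `Pr` is nonrecursive: no predicate depends on itself through `⋖⁺`. -/
def Program.Nonrecursive (Pr : Program V C P ar) : Prop :=
  ¬ ∃ p : P, Relation.TransGen Pr.DependsOn p p

/-- A fact `P(c̄)@ι`. -/
structure DFact (C P : Type) (ar : P → ℕ) where
  pred : P
  args : Fin (ar pred) → C
  ival : RIntv

/-- A data instance: a finite set (list) of facts. -/
abbrev Data (C P : Type) (ar : P → ℕ) := List (DFact C P ar)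

def Data.WF (D : Data C P ar) : Prop := ∀ f ∈ D, f.ival.Dyadic ∧ f.ival.toSet.Nonempty

def Data.MentionsPred (D : Data C P ar) (p : P) : Prop := ∃ f ∈ D, f.pred = p

def Data.consts (D : Data C P ar) : Set C := {c : C | ∃ f ∈ D, ∃ i, f.args i = c}

def Data.nums (D : Data C P ar) : Set ℝ := {x : ℝ | ∃ f ∈ D, x ∈ f.ival.nums}

/-- An interpretation: a nonempty domain containing the constants (standard name
assumption), and a time-dependent extension of every predicate. -/
structure Interp (C P : Type) (ar : P → ℕ) where
  Dom : Type
  domNonempty : Nonempty Dom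
  constVal : C → Dom
  constInj : Function.Injective constVal
  sat : (p : P) → (Fin (ar p) → Dom) → ℝ → Prop

/-- Evaluation of a term under an assignment `ν` (constants evaluate to themselves). -/
def Term.eval (M : Interp C P ar) (ν : V → M.Dom) : Term V C → M.Dom
  | .var v => ν v
  | .const c => M.constVal c

/-- Satisfaction of an atom at a time point, under an assignment `ν`. -/
def Interp.satA (M : Interp C P ar) (ν : V → M.Dom) : Atom V C P ar → ℝ → Prop
  | .pred p args, t => M.sat p (fun i => (args i).eval M ν) t
  | .top, _ => True
  | .neq τ τ', _ => τ.eval M ν ≠ τ'.eval M ν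
  | .boxPlus ρ A, t => ∀ s : ℝ, s - t ∈ ρ.toSet → M.satA ν A s
  | .boxMinus ρ A, t => ∀ s : ℝ, t - s ∈ ρ.toSet → M.satA ν A s
  | .diaPlus ρ A, t => ∃ s : ℝ, s - t ∈ ρ.toSet ∧ M.satA ν A s
  | .diaMinus ρ A, t => ∃ s : ℝ, t - s ∈ ρ.toSet ∧ M.satA ν A s
  | .untl ρ A B, t => ∃ t' : ℝ, t' - t ∈ ρ.toSet ∧ M.satA ν B t' ∧ ∀ s ∈ Set.Ioo t t', M.satA ν A s
  | .sinc ρ A B, t => ∃ t' : ℝ, t - t' ∈ ρ.toSet ∧ M.satA ν B t' ∧ ∀ s ∈ Set.Ioo t' t, M.satA ν A s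

/-- `M` satisfies a rule: at every time and under every assignment, the head holds
whenever all body atoms hold (`⊥` never holds). -/
def Interp.satRule (M : Interp C P ar) (r : Rule V C P ar) : Prop :=
  ∀ (ν : V → M.Dom) (t : ℝ), (∀ A ∈ r.body, M.satA ν A t) →
    (match r.head with
     | none => False
     | some A => M.satA ν A t)

/-- `M` is a model of `(Pr, D)`. -/
def IsModel (M : Interp C P ar) (Pr : Program V C P ar) (D : Data C P ar) : Prop :=
  (∀ r ∈ Pr.rules, M.satRule r) ∧
  (∀ f ∈ D, ∀ t ∈ f.ival.toSet, M.sat f.pred (fun i => M.constVal (f.args i)) t)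

/-- `(Pr, D)` is consistent: some model exists. -/
def Consistent (Pr : Program V C P ar) (D : Data C P ar) : Prop :=
  ∃ M : Interp C P ar, IsModel M Pr D

/-- `(σ, ι)` is a certain answer to `(Pr, Q(ts)@x)` over `D`: for every `t ∈ ι`,
every model `M` of `(Pr, D)` and every assignment `ν` mapping the variables of `ts`
to the corresponding constants (given by `σ`), `Q(ts)` holds at `t`. -/
def CertainAnswer (Pr : Program V C P ar) (D : Data C P ar)
    (Q : P) (ts : Fin (ar Q) → Term V C) (σ : V → C) (ι : RIntv) : Prop :=
  ∀ t ∈ ι.toSet, ∀ M : Interp C P ar, IsModel M Pr D →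
    ∀ ν : V → M.Dom,
      (∀ (v : V) (i : Fin (ar Q)), ts i = Term.var v → ν v = M.constVal (σ v)) →
        M.satA ν (Atom.pred Q ts) t

end DatalogMTL

namespace DatalogMTL

/-- Admissible embeddings of a domain with named constants into an interpretation. -/
def Emb {C P : Type} {ar : P → ℕ} {E : Type} (cv : C → E) (M : Interp C P ar)
    (h : E → M.Dom) : Prop :=
  Function.Injective h ∧ ∀ c, h (cv c) = M.constVal c

/-- The canonical interpretation over a given domain. -/
def canon {V C P : Type} {ar : P → ℕ} (Pr : Program V C P ar) (D : Data C P ar)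
    (E : Type) (hE : Nonempty E) (cv : C → E) (hcv : Function.Injective cv) : Interp C P ar where
  Dom := E
  domNonempty := hE
  constVal := cv
  constInj := hcv
  sat := fun p a t => ∀ M : Interp C P ar, IsModel M Pr D → ∀ h : E → M.Dom, Emb cv M h →
    M.sat p (fun i => h (a i)) t

section
variable {V C P : Type} {ar : P → ℕ} (Pr : Program V C P ar) (D : Data C P ar)
    (E : Type) (hE : Nonempty E) (cv : C → E) (hcv : Function.Injective cv)

theorem eval_canon (M : Interp C P ar) (h : E → M.Dom) (hh : Emb cv M h) (ν : V → E)
    (τ : Term V C) :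
    τ.eval M (fun v => h (ν v)) = h (τ.eval (canon Pr D E hE cv hcv) ν) := by
  cases τ with
  | var v => rfl
  | const c => exact (hh.2 c).symm

theorem body_canon (M : Interp C P ar) (hM : IsModel M Pr D) (h : E → M.Dom) (hh : Emb cv M h)
    (ν : V → E) (A : Atom V C P ar) : ∀ t : ℝ,
    (canon Pr D E hE cv hcv).satA ν A t → M.satA (fun v => h (ν v)) A t := by
  induction A with
  | pred p args =>
    intro t H
    have := H M hM h hh
    simpa only [Interp.satA, eval_canon Pr D E hE cv hcv M h hh] using this
  | top => intro t _; trivial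
  | neq τ τ' =>
    intro t H
    simp only [Interp.satA, eval_canon Pr D E hE cv hcv M h hh] at H ⊢
    exact fun e => H (hh.1 e)
  | boxPlus ρ A ih => exact fun t H s hs => ih s (H s hs)
  | boxMinus ρ A ih => exact fun t H s hs => ih s (H s hs)
  | diaPlus ρ A ih => exact fun t ⟨s, hs, H⟩ => ⟨s, hs, ih s H⟩
  | diaMinus ρ A ih => exact fun t ⟨s, hs, H⟩ => ⟨s, hs, ih s H⟩
  | untl ρ A B ihA ihB =>
    exact fun t ⟨s, hs, H, K⟩ => ⟨s, hs, ihB s H, fun u hu => ihA u (K u hu)⟩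
  | sinc ρ A B ihA ihB =>
    exact fun t ⟨s, hs, H, K⟩ => ⟨s, hs, ihB s H, fun u hu => ihA u (K u hu)⟩

theorem head_canon (M₀ : Interp C P ar) (hM₀ : IsModel M₀ Pr D) (h₀ : E → M₀.Dom)
    (hh₀ : Emb cv M₀ h₀) (ν : V → E) (A : Atom V C P ar) (hA : A.HeadOK) : ∀ t : ℝ,
    (∀ M : Interp C P ar, IsModel M Pr D → ∀ h : E → M.Dom, Emb cv M h →
      M.satA (fun v => h (ν v)) A t) →
    (canon Pr D E hE cv hcv).satA ν A t := by
  induction A with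
  | pred p args =>
    intro t H M hM h hh
    have := H M hM h hh
    simpa only [Interp.satA, eval_canon Pr D E hE cv hcv M h hh] using this
  | top => intro t _; trivial
  | neq τ τ' =>
    intro t H
    have H := H M₀ hM₀ h₀ hh₀
    simp only [Interp.satA, eval_canon Pr D E hE cv hcv M₀ h₀ hh₀] at H ⊢
    exact fun e => H (congrArg h₀ e)
  | boxPlus ρ A ih => exact fun t H s hs => ih hA s (fun M hM h hh => H M hM h hh s hs)
  | boxMinus ρ A ih => exact fun t H s hs => ih hA s (fun M hM h hh => H M hM h hh s hs)
  | diaPlus ρ A ih => exact hA.elim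
  | diaMinus ρ A ih => exact hA.elim
  | untl ρ A B ihA ihB => exact hA.elim
  | sinc ρ A B ihA ihB => exact hA.elim

theorem canon_model (hPr : Pr.WF) (hcons : Consistent Pr D)
    (hemb : ∀ M : Interp C P ar, ∃ h : E → M.Dom, Emb cv M h) :
    IsModel (canon Pr D E hE cv hcv) Pr D := by
  obtain ⟨M₀, hM₀⟩ := hcons
  obtain ⟨h₀, hh₀⟩ := hemb M₀
  constructor
  · intro r hr ν t hb
    have key : ∀ M : Interp C P ar, IsModel M Pr D → ∀ h : E → M.Dom, Emb cv M h → _ :=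
      fun M hM h hh => hM.1 r hr (fun v => h (ν v)) t
        (fun A hA => body_canon Pr D E hE cv hcv M hM h hh ν A t (hb A hA))
    have wf := (hPr r hr).2.2
    cases hhd : r.head with
    | none =>
      have := key M₀ hM₀ h₀ hh₀
      rw [hhd] at this
      exact this
    | some A =>
      simp only [hhd] at key
      exact head_canon Pr D E hE cv hcv M₀ hM₀ h₀ hh₀ ν A (wf A hhd).1 t key
  · intro f hf t ht M hM h hh
    have := hM.2 f hf t ht
    simp only [← hh.2] at this
    exact this

end

end DatalogMTL

open DatalogMTL in
/-- every consistent `(Π, D)` has a minimal (canonical) model `Cm`: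
every ground atom `P(c̄)` (with `P` and the constants `c̄` occurring in `Π` or `D`)
true in `Cm` at a time `t` is true at `t` in every model of `(Π, D)`. -/
theorem statement2
    {V C P : Type} {ar : P → ℕ}
    (Pr : Program V C P ar) (hPr : Pr.WF)
    (D : Data C P ar) (hD : Data.WF D)
    (hcons : Consistent Pr D) :
    ∃ Cm : Interp C P ar, IsModel Cm Pr D ∧
      ∀ M : Interp C P ar, IsModel M Pr D →
        ∀ p : P, (Pr.MentionsPred p ∨ Data.MentionsPred D p) →
          ∀ cs : Fin (ar p) → C, (∀ i, cs i ∈ Pr.consts ∪ Data.consts D) →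
            ∀ t : ℝ,
              Cm.sat p (fun i => Cm.constVal (cs i)) t →
                M.sat p (fun i => M.constVal (cs i)) t := by
  have main : ∃ (E : Type) (_ : Nonempty E) (cv : C → E), Function.Injective cv ∧
      ∀ M : Interp C P ar, ∃ h : E → M.Dom, Emb cv M h := by
    rcases isEmpty_or_nonempty C with hC | hC
    · refine ⟨Unit, ⟨()⟩, fun _ => (), fun a => hC.elim a, fun M => ?_⟩
      obtain ⟨d⟩ := M.domNonempty
      exact ⟨fun _ => d, fun _ _ _ => rfl, fun c => hC.elim c⟩
    · exact ⟨C, hC, id, Function.injective_id, fun M => ⟨M.constVal, M.constInj, fun _ => rfl⟩⟩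
  obtain ⟨E, hE, cv, hcv, hemb⟩ := main
  refine ⟨canon Pr D E hE cv hcv, canon_model Pr D E hE cv hcv hPr hcons hemb, ?_⟩
  intro M hM p _ cs _ t H
  obtain ⟨h, hh⟩ := hemb M
  have := H M hM h hh
  have e : (fun i => h ((canon Pr D E hE cv hcv).constVal (cs i))) =
      fun i => M.constVal (cs i) := funext fun i => hh.2 (cs i)
  exact e ▸ this
end

section
/- Let Π be a datalogMTL program and D a data instance such that (Π, D) is consistent, and let d > 0 be a real number such that every (finite) number occurring as an endpoint of a range in Π or of an interval in D is an integer multiple of d. Then there exists a minimal model C of (Π, D) (i.e., a model such that every ground atom true in C at a time t is true in every model of (Π, D) at t) with the following homogeneity property: for every predicate P, every tuple c̄ of constants from Π or D, and every k ∈ ℤ, either C, t ⊨ P(c̄) holds for all t in the open interval ((k−1)·d, k·d), or it holds for no t in that interval. -/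
namespace DatalogMTL

noncomputable def mob (c x : ℝ) : ℝ := c * x / ((1 - x) + c * x)

theorem mob_den {c x : ℝ} (hc : 0 < c) (h0 : 0 ≤ x) (h1 : x < 1) : 0 < (1 - x) + c * x := by
  have := mul_nonneg hc.le h0
  linarith

theorem mob_nonneg {c x : ℝ} (hc : 0 < c) (h0 : 0 ≤ x) (h1 : x < 1) : 0 ≤ mob c x :=
  div_nonneg (mul_nonneg hc.le h0) (mob_den hc h0 h1).le

theorem mob_lt {c x : ℝ} (hc : 0 < c) (h0 : 0 ≤ x) (h1 : x < 1) : mob c x < 1 := by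
  unfold mob
  rw [div_lt_one (mob_den hc h0 h1)]
  linarith

theorem mob_mono {c x y : ℝ} (hc : 0 < c) (h0 : 0 ≤ x) (hxy : x < y) (h1 : y < 1) :
    mob c x < mob c y := by
  unfold mob
  rw [div_lt_div_iff₀ (mob_den hc h0 (hxy.trans h1)) (mob_den hc (h0.trans hxy.le) h1)]
  have := mul_lt_mul_of_pos_left hxy hc
  nlinarith

theorem mob_inv {c x : ℝ} (hc : 0 < c) (h0 : 0 ≤ x) (h1 : x < 1) :
    mob c (mob c⁻¹ x) = x := by
  have h := mob_den (inv_pos.2 hc) h0 h1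
  have h2 : mob c⁻¹ x = x / (c * (1 - x) + x) := by
    unfold mob
    have : 0 < c * (1 - x) + x := by
      have := mul_pos hc (sub_pos.2 h1)
      linarith
    field_simp
  have h3 : 0 < c * (1 - x) + x := by
    have := mul_pos hc (sub_pos.2 h1)
    linarith
  have h4 := mob_den hc (mob_nonneg (inv_pos.2 hc) h0 h1) (mob_lt (inv_pos.2 hc) h0 h1)
  rw [mob, div_eq_iff h4.ne', h2]
  field_simp
  ring

noncomputable def psi (c t : ℝ) : ℝ := ⌊t⌋ + mob c (Int.fract t)

theorem psi_add (c t : ℝ) (k : ℤ) : psi c (t + k) = psi c t + k := by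
  simp [psi]; ring

theorem psi_mono {c : ℝ} (hc : 0 < c) : StrictMono (psi c) := by
  intro x y hxy
  unfold psi
  rcases (Int.floor_mono hxy.le).lt_or_eq with h | h
  · have h1 := mob_lt hc (Int.fract_nonneg x) (Int.fract_lt_one x)
    have h2 := mob_nonneg hc (Int.fract_nonneg y) (Int.fract_lt_one y)
    have h3 : ((⌊x⌋ : ℝ)) + 1 ≤ ⌊y⌋ := by exact_mod_cast h
    linarith
  · have : Int.fract x < Int.fract y := by
      unfold Int.fract
      rw [h]; linarith
    rw [h]
    have := mob_mono hc (Int.fract_nonneg x) this (Int.fract_lt_one y)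
    linarith

theorem psi_surj {c : ℝ} (hc : 0 < c) : Function.Surjective (psi c) := by
  intro y
  have h0 := mob_nonneg (inv_pos.2 hc) (Int.fract_nonneg y) (Int.fract_lt_one y)
  have h1 := mob_lt (inv_pos.2 hc) (Int.fract_nonneg y) (Int.fract_lt_one y)
  refine ⟨mob c⁻¹ (Int.fract y) + (⌊y⌋ : ℤ), ?_⟩
  rw [psi_add, psi, Int.floor_eq_zero_iff.2 ⟨h0, h1⟩, Int.fract_eq_self.2 ⟨h0, h1⟩,
    mob_inv hc (Int.fract_nonneg y) (Int.fract_lt_one y)]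
  rw [Int.cast_zero, zero_add, Int.fract_add_floor]

/-- A warp of the timeline respecting the grid. -/
structure Warp (d : ℝ) where
  f : ℝ → ℝ
  mono : StrictMono f
  surj : Function.Surjective f
  shift : ∀ (t : ℝ) (k : ℤ), f (t + k * d) = f t + k * d
  zero : f 0 = 0

theorem exists_warp {d : ℝ} (hd : 0 < d) (k : ℤ) {t t' : ℝ}
    (ht : t ∈ Set.Ioo (((k : ℝ) - 1) * d) ((k : ℝ) * d))
    (ht' : t' ∈ Set.Ioo (((k : ℝ) - 1) * d) ((k : ℝ) * d)) :
    ∃ w : Warp d, w.f t = t' := by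
  have key : ∀ s ∈ Set.Ioo (((k : ℝ) - 1) * d) ((k : ℝ) * d),
      ∃ a, 0 < a ∧ a < 1 ∧ s / d = a + (k - 1 : ℤ) := by
    intro s hs
    refine ⟨s / d - (k - 1 : ℤ), ?_, ?_, by ring⟩
    · have := (lt_div_iff₀ hd).2 hs.1
      push_cast; linarith
    · have := (div_lt_iff₀ hd).2 hs.2
      push_cast; linarith
  obtain ⟨a, ha0, ha1, ha⟩ := key t ht
  obtain ⟨b, hb0, hb1, hb⟩ := key t' ht'
  have ha2 : 0 < 1 - a := by linarith
  have hb2 : 0 < 1 - b := by linarith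
  have hc : 0 < b * (1 - a) / (a * (1 - b)) := by positivity
  set c := b * (1 - a) / (a * (1 - b)) with hcdef
  have hmob : mob c a = b := by
    rw [mob, div_eq_iff (mob_den hc ha0.le ha1).ne', hcdef]
    field_simp
    ring
  refine ⟨⟨fun s => d * psi c (s / d), ?_, ?_, ?_, ?_⟩, ?_⟩
  · intro x y hxy
    exact mul_lt_mul_of_pos_left (psi_mono hc (div_lt_div_of_pos_right hxy hd)) hd
  · intro y
    obtain ⟨x, hx⟩ := psi_surj hc (y / d)
    refine ⟨x * d, ?_⟩
    simp only [mul_div_cancel_right₀ _ hd.ne', hx]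
    field_simp
  · intro s j
    have : (s + j * d) / d = s / d + j := by field_simp
    simp only [this, psi_add]
    ring
  · simp [psi, mob]
  · simp only
    rw [ha, psi_add, psi, Int.floor_eq_zero_iff.2 ⟨ha0.le, ha1⟩, Int.fract_eq_self.2 ⟨ha0.le, ha1⟩,
      hmob]
    rw [Int.cast_zero, zero_add, ← hb]
    field_simp

theorem Warp.lo_iff {d : ℝ} (w : Warp d) (x : EReal)
    (hx : ∀ y : ℝ, x = y → ∃ k : ℤ, y = k * d) (s t : ℝ) :
    (x ≤ ((w.f s - w.f t : ℝ) : EReal) ↔ x ≤ ((s - t : ℝ) : EReal)) ∧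
    (x < ((w.f s - w.f t : ℝ) : EReal) ↔ x < ((s - t : ℝ) : EReal)) ∧
    (((w.f s - w.f t : ℝ) : EReal) ≤ x ↔ ((s - t : ℝ) : EReal) ≤ x) ∧
    (((w.f s - w.f t : ℝ) : EReal) < x ↔ ((s - t : ℝ) : EReal) < x) := by
  induction x with
  | bot => simp [-EReal.coe_sub, EReal.bot_lt_coe, EReal.coe_lt_top]
  | top => simp [-EReal.coe_sub, EReal.bot_lt_coe, EReal.coe_lt_top]
  | coe y =>
    obtain ⟨k, hk⟩ := hx y rfl
    have h1 : (y ≤ w.f s - w.f t ↔ y ≤ s - t) := by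
      rw [le_sub_iff_add_le', le_sub_iff_add_le', hk, ← w.shift, w.mono.le_iff_le]
    have h2 : (w.f s - w.f t ≤ y ↔ s - t ≤ y) := by
      rw [sub_le_iff_le_add', sub_le_iff_le_add', hk, ← w.shift, w.mono.le_iff_le]
    refine ⟨by exact_mod_cast h1, ?_, by exact_mod_cast h2, ?_⟩
    · rw [EReal.coe_lt_coe_iff, EReal.coe_lt_coe_iff, ← not_le, ← not_le, h2]
    · rw [EReal.coe_lt_coe_iff, EReal.coe_lt_coe_iff, ← not_le, ← not_le, h1]

theorem Warp.mem_iff {d : ℝ} (w : Warp d) (ρ : RIntv)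
    (hx : ∀ y ∈ ρ.nums, ∃ k : ℤ, y = k * d) (s t : ℝ) :
    w.f s - w.f t ∈ ρ.toSet ↔ s - t ∈ ρ.toSet := by
  obtain ⟨a1, a2, -, -⟩ := w.lo_iff ρ.lo (fun y hy => hx y (Or.inl hy)) s t
  obtain ⟨-, -, a3, a4⟩ := w.lo_iff ρ.hi (fun y hy => hx y (Or.inr hy)) s t
  simp only [RIntv.toSet, Set.mem_ofPred_eq, a1, a2, a3, a4]

theorem Warp.mem_iff0 {d : ℝ} (w : Warp d) (ρ : RIntv)
    (hx : ∀ y ∈ ρ.nums, ∃ k : ℤ, y = k * d) (s : ℝ) :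
    w.f s ∈ ρ.toSet ↔ s ∈ ρ.toSet := by
  have := w.mem_iff ρ hx s 0
  simpa [w.zero] using this

theorem Warp.ioo_iff {d : ℝ} (w : Warp d) (a b : ℝ) (Q : ℝ → Prop) :
    (∀ s ∈ Set.Ioo (w.f a) (w.f b), Q s) ↔ ∀ s ∈ Set.Ioo a b, Q (w.f s) := by
  constructor
  · intro h s hs
    exact h _ ⟨w.mono hs.1, w.mono hs.2⟩
  · intro h s hs
    obtain ⟨u, rfl⟩ := w.surj s
    exact h u ⟨w.mono.lt_iff_lt.1 hs.1, w.mono.lt_iff_lt.1 hs.2⟩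

variable {V C P : Type} {ar : P → ℕ}

/-- Warped interpretation. -/
def Interp.warp {d : ℝ} (M : Interp C P ar) (w : Warp d) : Interp C P ar :=
  ⟨M.Dom, M.domNonempty, M.constVal, M.constInj, fun p a t => M.sat p a (w.f t)⟩

theorem warp_eval {d : ℝ} (M : Interp C P ar) (w : Warp d) (ν : V → M.Dom) (τ : Term V C) :
    τ.eval (M.warp w) ν = τ.eval M ν := by
  cases τ <;> rfl

theorem warp_satA {d : ℝ} (M : Interp C P ar) (w : Warp d) (ν : V → M.Dom)
    (A : Atom V C P ar) (hA : ∀ y ∈ A.nums, ∃ k : ℤ, y = k * d) (t : ℝ) :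
    (M.warp w).satA ν A t ↔ M.satA ν A (w.f t) := by
  induction A generalizing t with
  | pred p args =>
    simp only [Interp.satA, warp_eval]
    rfl
  | top => simp [Interp.satA]
  | neq a b => simp only [Interp.satA, warp_eval]; rfl
  | boxPlus ρ A ih =>
    simp only [Atom.nums, Set.mem_union] at hA
    have h := fun s => w.mem_iff ρ (fun y hy => hA y (.inl hy)) s t
    simp only [Interp.satA, ih (fun y hy => hA y (.inr hy))]
    exact (w.surj.forall.trans (by simp only [h])).symm
  | boxMinus ρ A ih =>
    simp only [Atom.nums, Set.mem_union] at hA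
    have h := fun s => w.mem_iff ρ (fun y hy => hA y (.inl hy)) t s
    simp only [Interp.satA, ih (fun y hy => hA y (.inr hy))]
    exact (w.surj.forall.trans (by simp only [h])).symm
  | diaPlus ρ A ih =>
    simp only [Atom.nums, Set.mem_union] at hA
    have h := fun s => w.mem_iff ρ (fun y hy => hA y (.inl hy)) s t
    simp only [Interp.satA, ih (fun y hy => hA y (.inr hy))]
    exact (w.surj.exists.trans (by simp only [h])).symm
  | diaMinus ρ A ih =>
    simp only [Atom.nums, Set.mem_union] at hA
    have h := fun s => w.mem_iff ρ (fun y hy => hA y (.inl hy)) t s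
    simp only [Interp.satA, ih (fun y hy => hA y (.inr hy))]
    exact (w.surj.exists.trans (by simp only [h])).symm
  | untl ρ A B ihA ihB =>
    simp only [Atom.nums, Set.mem_union] at hA
    have h := fun s => w.mem_iff ρ (fun y hy => hA y (.inl (.inl hy))) s t
    simp only [Interp.satA, ihA (fun y hy => hA y (.inl (.inr hy))),
      ihB (fun y hy => hA y (.inr hy))]
    exact (w.surj.exists.trans (by simp only [h, w.ioo_iff])).symm
  | sinc ρ A B ihA ihB =>
    simp only [Atom.nums, Set.mem_union] at hA
    have h := fun s => w.mem_iff ρ (fun y hy => hA y (.inl (.inl hy))) t s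
    simp only [Interp.satA, ihA (fun y hy => hA y (.inl (.inr hy))),
      ihB (fun y hy => hA y (.inr hy))]
    exact (w.surj.exists.trans (by simp only [h, w.ioo_iff])).symm

theorem warp_model {d : ℝ} (M : Interp C P ar) (w : Warp d) (Pr : Program V C P ar)
    (D : Data C P ar) (hmul : ∀ x ∈ Pr.nums ∪ Data.nums D, ∃ k : ℤ, x = (k : ℝ) * d)
    (h : IsModel M Pr D) : IsModel (M.warp w) Pr D := by
  constructor
  · intro r hr ν t hb
    have h1 := h.1 r hr ν (w.f t) (fun A hA => (warp_satA M w ν A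
      (fun y hy => hmul y (.inl ⟨r, hr, .inl ⟨A, hA, hy⟩⟩)) t).1 (hb A hA))
    cases hh : r.head with
    | none => rw [hh] at h1; exact h1
    | some A =>
      rw [hh] at h1
      exact (warp_satA M w ν A
        (fun y hy => hmul y (.inl ⟨r, hr, .inr ⟨A, hh, hy⟩⟩)) t).2 h1
  · intro f hf t ht
    exact h.2 f hf (w.f t)
      ((w.mem_iff0 f.ival (fun y hy => hmul y (.inr ⟨f, hf, hy⟩)) t).2 ht)

section pull
variable (D0 : Type) (hne : Nonempty D0) (c0 : C → D0) (hinj : Function.Injective c0)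

/-- Interpretation over a fixed domain. -/
def mk0 (S : (p : P) → (Fin (ar p) → D0) → ℝ → Prop) : Interp C P ar :=
  ⟨D0, hne, c0, hinj, S⟩

theorem pull_eval (M : Interp C P ar) (f : D0 → M.Dom) (hf : ∀ c, f (c0 c) = M.constVal c)
    (S : (p : P) → (Fin (ar p) → D0) → ℝ → Prop) (ν : V → D0) (τ : Term V C) :
    f (τ.eval (mk0 D0 hne c0 hinj S) ν) = τ.eval M (fun v => f (ν v)) := by
  cases τ
  · rfl
  · exact hf _

theorem pull_satA (M : Interp C P ar) (f : D0 → M.Dom) (hfi : Function.Injective f)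
    (hf : ∀ c, f (c0 c) = M.constVal c) (ν : V → D0) (A : Atom V C P ar) (t : ℝ) :
    (mk0 D0 hne c0 hinj (fun p a t => M.sat p (fun i => f (a i)) t)).satA ν A t ↔
      M.satA (fun v => f (ν v)) A t := by
  induction A generalizing t with
  | pred p args =>
    simp only [Interp.satA, ← pull_eval D0 hne c0 hinj M f hf
      (fun p a t => M.sat p (fun i => f (a i)) t)]
    rfl
  | top => simp [Interp.satA]
  | neq a b =>
    simp only [Interp.satA, ← pull_eval D0 hne c0 hinj M f hf
      (fun p a t => M.sat p (fun i => f (a i)) t)]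
    exact (hfi.ne_iff).symm
  | boxPlus ρ A ih => simp only [Interp.satA, ih]
  | boxMinus ρ A ih => simp only [Interp.satA, ih]
  | diaPlus ρ A ih => simp only [Interp.satA, ih]
  | diaMinus ρ A ih => simp only [Interp.satA, ih]
  | untl ρ A B ihA ihB => simp only [Interp.satA, ihA, ihB]
  | sinc ρ A B ihA ihB => simp only [Interp.satA, ihA, ihB]

theorem pull_model (M : Interp C P ar) (f : D0 → M.Dom) (hfi : Function.Injective f)
    (hf : ∀ c, f (c0 c) = M.constVal c) (Pr : Program V C P ar)
    (D : Data C P ar) (h : IsModel M Pr D) :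
    IsModel (mk0 D0 hne c0 hinj (fun p a t => M.sat p (fun i => f (a i)) t)) Pr D := by
  constructor
  · intro r hr ν t hb
    have h1 := h.1 r hr (fun v => f (ν v)) t (fun A hA =>
      (pull_satA D0 hne c0 hinj M f hfi hf ν A t).1 (hb A hA))
    cases hh : r.head with
    | none => rw [hh] at h1; exact h1
    | some A =>
      rw [hh] at h1
      exact (pull_satA D0 hne c0 hinj M f hfi hf ν A t).2 h1
  · intro g hg t ht
    have := h.2 g hg t ht
    simp only [← hf] at this
    exact this

theorem eval_mk0 (S S' : (p : P) → (Fin (ar p) → D0) → ℝ → Prop) (ν : V → D0) (τ : Term V C) :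
    τ.eval (mk0 D0 hne c0 hinj S) ν = τ.eval (mk0 D0 hne c0 hinj S') ν := by
  cases τ <;> rfl

theorem mono_satA (S S' : (p : P) → (Fin (ar p) → D0) → ℝ → Prop)
    (hS : ∀ p a t, S p a t → S' p a t) (ν : V → D0) (A : Atom V C P ar) (t : ℝ)
    (h : (mk0 D0 hne c0 hinj S).satA ν A t) : (mk0 D0 hne c0 hinj S').satA ν A t := by
  induction A generalizing t with
  | pred p args =>
    simp only [Interp.satA, eval_mk0 D0 hne c0 hinj S' S] at h ⊢
    exact hS _ _ _ h
  | top => trivial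
  | neq a b =>
    simp only [Interp.satA, eval_mk0 D0 hne c0 hinj S' S] at h ⊢
    exact h
  | boxPlus ρ A ih => exact fun s hs => ih s (h s hs)
  | boxMinus ρ A ih => exact fun s hs => ih s (h s hs)
  | diaPlus ρ A ih => obtain ⟨s, hs, h⟩ := h; exact ⟨s, hs, ih s h⟩
  | diaMinus ρ A ih => obtain ⟨s, hs, h⟩ := h; exact ⟨s, hs, ih s h⟩
  | untl ρ A B ihA ihB =>
    obtain ⟨s, hs, h, h'⟩ := h
    exact ⟨s, hs, ihB s h, fun u hu => ihA u (h' u hu)⟩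
  | sinc ρ A B ihA ihB =>
    obtain ⟨s, hs, h, h'⟩ := h
    exact ⟨s, hs, ihB s h, fun u hu => ihA u (h' u hu)⟩

/-- Intersection of a family. -/
def inter (F : Set ((p : P) → (Fin (ar p) → D0) → ℝ → Prop)) :
    (p : P) → (Fin (ar p) → D0) → ℝ → Prop := fun p a t => ∀ S ∈ F, S p a t

theorem inter_head (F : Set ((p : P) → (Fin (ar p) → D0) → ℝ → Prop)) (hF : F.Nonempty)
    (ν : V → D0) (A : Atom V C P ar) (hA : A.HeadOK) (t : ℝ)
    (h : ∀ S ∈ F, (mk0 D0 hne c0 hinj S).satA ν A t) :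
    (mk0 D0 hne c0 hinj (inter D0 F)).satA ν A t := by
  induction A generalizing t with
  | pred p args =>
    intro S hS
    have := h S hS
    simp only [Interp.satA, eval_mk0 D0 hne c0 hinj S (inter D0 F)] at this
    exact this
  | top => trivial
  | neq a b =>
    obtain ⟨S, hS⟩ := hF
    have := h S hS
    simp only [Interp.satA, eval_mk0 D0 hne c0 hinj S (inter D0 F)] at this ⊢
    exact this
  | boxPlus ρ A ih => exact fun s hs => ih hA s (fun S hS => h S hS s hs)
  | boxMinus ρ A ih => exact fun s hs => ih hA s (fun S hS => h S hS s hs)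
  | diaPlus ρ A ih => exact hA.elim
  | diaMinus ρ A ih => exact hA.elim
  | untl ρ A B ihA ihB => exact hA.elim
  | sinc ρ A B ihA ihB => exact hA.elim

end pull

theorem main0 (D0 : Type) (hne : Nonempty D0) (c0 : C → D0) (hinj : Function.Injective c0)
    (Pr : Program V C P ar) (hPr : Pr.WF) (D : Data C P ar)
    (hcons : Consistent Pr D) (d : ℝ) (hd : 0 < d)
    (hmul : ∀ x ∈ Pr.nums ∪ Data.nums D, ∃ k : ℤ, x = (k : ℝ) * d)
    (hemb : ∀ M : Interp C P ar, ∃ f : D0 → M.Dom, Function.Injective f ∧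
      ∀ c, f (c0 c) = M.constVal c) :
    ∃ Cm : Interp C P ar, IsModel Cm Pr D ∧
      (∀ M : Interp C P ar, IsModel M Pr D →
        ∀ (p : P) (cs : Fin (ar p) → C) (t : ℝ),
          Cm.sat p (fun i => Cm.constVal (cs i)) t →
            M.sat p (fun i => M.constVal (cs i)) t) ∧
      (∀ (p : P) (cs : Fin (ar p) → C) (k : ℤ),
          (∀ t ∈ Set.Ioo (((k : ℝ) - 1) * d) ((k : ℝ) * d),
              Cm.sat p (fun i => Cm.constVal (cs i)) t) ∨
          (∀ t ∈ Set.Ioo (((k : ℝ) - 1) * d) ((k : ℝ) * d),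
              ¬ Cm.sat p (fun i => Cm.constVal (cs i)) t)) := by
  set F : Set ((p : P) → (Fin (ar p) → D0) → ℝ → Prop) :=
    {S | IsModel (mk0 D0 hne c0 hinj S) Pr D} with hFdef
  have hF : F.Nonempty := by
    obtain ⟨M, hM⟩ := hcons
    obtain ⟨f, hfi, hf⟩ := hemb M
    exact ⟨_, pull_model D0 hne c0 hinj M f hfi hf Pr D hM⟩
  refine ⟨mk0 D0 hne c0 hinj (inter D0 F), ⟨?_, ?_⟩, ?_, ?_⟩
  · intro r hr ν t hb
    have h1 := fun S (hS : S ∈ F) => hS.1 r hr ν t (fun A hA =>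
      mono_satA D0 hne c0 hinj (inter D0 F) S (fun p a t h => h S hS) ν A t (hb A hA))
    cases hh : r.head with
    | none =>
      simp only [hh] at h1
      obtain ⟨S, hS⟩ := hF
      exact h1 S hS
    | some A =>
      simp only [hh] at h1
      exact inter_head D0 hne c0 hinj F hF ν A ((hPr r hr).2.2 A hh).1 t h1
  · intro g hg t ht S hS
    exact hS.2 g hg t ht
  · intro M hM p cs t h
    obtain ⟨f, hfi, hf⟩ := hemb M
    have := h _ (pull_model D0 hne c0 hinj M f hfi hf Pr D hM)
    simp only [← hf]
    exact this
  · intro p cs k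
    by_cases hex : ∃ t ∈ Set.Ioo (((k : ℝ) - 1) * d) ((k : ℝ) * d),
        (mk0 D0 hne c0 hinj (inter D0 F)).sat p (fun i => c0 (cs i)) t
    · left
      obtain ⟨t0, ht0, h0⟩ := hex
      intro t ht S hS
      obtain ⟨w, hw⟩ := exists_warp hd k ht0 ht
      have h1 := h0 (fun p a t => S p a (w.f t)) (warp_model _ w Pr D hmul hS)
      simp only [hw] at h1
      exact h1
    · right
      intro t ht h
      exact hex ⟨t, ht, h⟩

end DatalogMTL

open DatalogMTL in
/-- Lemma on sections: if `(Π, D)` is consistent and every finite number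
occurring as an endpoint of a range in `Π` or of an interval in `D` is an integer multiple
of `d > 0`, then there is a minimal model `Cm` of `(Π, D)` which is homogeneous on the
open sections `((k−1)·d, k·d)`: for constants from `Π` or `D`, each ground atom is either
true throughout such a section or false throughout it. -/
theorem statement3
    {V C P : Type} {ar : P → ℕ}
    (Pr : Program V C P ar) (hPr : Pr.WF)
    (D : Data C P ar) (hD : Data.WF D)
    (hcons : Consistent Pr D)
    (d : ℝ) (hd : 0 < d)
    (hmul : ∀ x ∈ Pr.nums ∪ Data.nums D, ∃ k : ℤ, x = (k : ℝ) * d) :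
    ∃ Cm : Interp C P ar, IsModel Cm Pr D ∧
      -- minimality: every ground atom true in `Cm` at `t` is true in every model at `t`
      (∀ M : Interp C P ar, IsModel M Pr D →
        ∀ (p : P) (cs : Fin (ar p) → C) (t : ℝ),
          Cm.sat p (fun i => Cm.constVal (cs i)) t →
            M.sat p (fun i => M.constVal (cs i)) t) ∧
      -- homogeneity on open sections
      (∀ (p : P) (cs : Fin (ar p) → C), (∀ i, cs i ∈ Pr.consts ∪ Data.consts D) →
        ∀ k : ℤ,
          (∀ t ∈ Set.Ioo (((k : ℝ) - 1) * d) ((k : ℝ) * d),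
              Cm.sat p (fun i => Cm.constVal (cs i)) t) ∨
          (∀ t ∈ Set.Ioo (((k : ℝ) - 1) * d) ((k : ℝ) * d),
              ¬ Cm.sat p (fun i => Cm.constVal (cs i)) t)) := by
  rcases isEmpty_or_nonempty C with hC | hC
  · obtain ⟨Cm, h1, h2, h3⟩ := main0 Unit ⟨()⟩ (fun c : C => ()) (fun a => (hC.false a).elim)
      Pr hPr D hcons d hd hmul (fun M => by
        obtain ⟨e⟩ := M.domNonempty
        exact ⟨fun _ => e, fun _ _ _ => rfl, fun c => (hC.false c).elim⟩)
    exact ⟨Cm, h1, h2, fun p cs _ k => h3 p cs k⟩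
  · obtain ⟨Cm, h1, h2, h3⟩ := main0 C hC (fun c : C => c) (fun a b h => h)
      Pr hPr D hcons d hd hmul (fun M => ⟨M.constVal, M.constInj, fun _ => rfl⟩)
    exact ⟨Cm, h1, h2, fun p cs _ k => h3 p cs k⟩
end

section
/- Let Π be a datalogMTL program containing a rule r of the form □⁺_{ϱ′} P(τ̄) ← P₁(τ̄₁) ∧ □⁻_ϱ P₂(τ̄₂), and let P′ and P′₂ be fresh predicates, of the same arities as P and P₂ respectively, occurring nowhere in Π. Let Π″ be obtained from Π by replacing r with the three rules P′(τ̄) ← P₁(τ̄₁) ∧ P′₂(τ̄₂); P′₂(τ̄₂) ← □⁻_ϱ P₂(τ̄₂); and P(τ̄) ← ⊤ S_{ϱ′} P′(τ̄). Then for every data instance D not mentioning P′ or P′₂ and every goal Q(σ̄)@x with Q a predicate occurring in Π (in particular, Q ∉ {P′, P′₂}), the certain answers to (Π, Q(σ̄)@x) over D coincide with the certain answers to (Π″, Q(σ̄)@x) over D. -/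
namespace DatalogMTL

def Interp.withSat {C P : Type} {ar : P → ℕ} (M : Interp C P ar)
    (S : (p : P) → (Fin (ar p) → M.Dom) → ℝ → Prop) : Interp C P ar :=
  { Dom := M.Dom, domNonempty := M.domNonempty, constVal := M.constVal,
    constInj := M.constInj, sat := S }

theorem eval_withSat {V C P : Type} {ar : P → ℕ} (M : Interp C P ar)
    (S : (p : P) → (Fin (ar p) → M.Dom) → ℝ → Prop) (ν : V → M.Dom) (τ : Term V C) :
    (Term.eval (M.withSat S) ν τ : M.Dom) = Term.eval M ν τ := by
  cases τ <;> rfl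

theorem satA_withSat {V C P : Type} {ar : P → ℕ} (M : Interp C P ar)
    (S : (p : P) → (Fin (ar p) → M.Dom) → ℝ → Prop) (ν : V → M.Dom) (A : Atom V C P ar) :
    (∀ p, A.mentionsPred p → ∀ a t, S p a t ↔ M.sat p a t) →
    ∀ t, (M.withSat S).satA ν A t ↔ M.satA ν A t := by
  induction A with
  | pred p args =>
    intro h t
    have e : (fun i => (Term.eval (M.withSat S) ν (args i) : M.Dom))
      = fun i => Term.eval M ν (args i) := funext fun i => eval_withSat M S ν (args i)
    change S p (fun i => (Term.eval (M.withSat S) ν (args i) : M.Dom)) t ↔ _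
    rw [e]
    exact h p rfl _ t
  | top => intro _ _; exact Iff.rfl
  | neq τ τ' =>
    intro _ _
    change (Term.eval (M.withSat S) ν τ : M.Dom) ≠ Term.eval (M.withSat S) ν τ' ↔ _
    rw [eval_withSat, eval_withSat]; exact Iff.rfl
  | boxPlus ρ A ih | boxMinus ρ A ih | diaPlus ρ A ih | diaMinus ρ A ih =>
    intro h t
    have := ih h
    simp only [Interp.satA, this]
  | untl ρ A B ih1 ih2 | sinc ρ A B ih1 ih2 =>
    intro h t
    have h1 := ih1 (fun p hp => h p (Or.inl hp))
    have h2 := ih2 (fun p hp => h p (Or.inr hp))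
    simp only [Interp.satA, h1, h2]

theorem satRule_withSat {V C P : Type} {ar : P → ℕ} (M : Interp C P ar)
    (S : (p : P) → (Fin (ar p) → M.Dom) → ℝ → Prop) (r : Rule V C P ar)
    (h : ∀ p, r.mentionsPred p → ∀ a t, S p a t ↔ M.sat p a t)
    (hs : M.satRule r) : (M.withSat S).satRule r := by
  intro ν t hb
  have := hs ν t (fun A hA =>
    (satA_withSat M S ν A (fun p hp => h p (Or.inl ⟨A, hA, hp⟩)) t).1 (hb A hA))
  rcases r with ⟨_ | A, b⟩
  · exact this
  · exact (satA_withSat M S ν A (fun p hp => h p (Or.inr ⟨A, rfl, hp⟩)) t).2 this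

end DatalogMTL

open DatalogMTL in
/-- normal-form transformation: replacing the rule
`□⁺_{ϱ′} Pp(ts) ← P₁(ts₁) ∧ □⁻_ϱ P₂(ts₂)` by the three rules
`P′(ts) ← P₁(ts₁) ∧ P′₂(ts₂)`, `P′₂(ts₂) ← □⁻_ϱ P₂(ts₂)`, `Pp(ts) ← ⊤ S_{ϱ′} P′(ts)`
(with fresh predicates `P′`, `P′₂`) preserves the certain answers to every goal whose
predicate occurs in the original program, over every data instance not mentioning
the fresh predicates. -/
theorem statement5
    {V C P : Type} {ar : P → ℕ}
    (Pr : Program V C P ar) (hPr : Pr.WF)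
    (Pp : P) (ts : Fin (ar Pp) → Term V C)
    (P₁ : P) (ts₁ : Fin (ar P₁) → Term V C)
    (P₂ : P) (ts₂ : Fin (ar P₂) → Term V C)
    (ρ ρ' : RIntv)
    (r : Rule V C P ar)
    (hr : r = ⟨some (Atom.boxPlus ρ' (Atom.pred Pp ts)),
               [Atom.pred P₁ ts₁, Atom.boxMinus ρ (Atom.pred P₂ ts₂)]⟩)
    (hrmem : r ∈ Pr.rules)
    (P' P'₂ : P) (hne : P' ≠ P'₂)
    (hP'ar : ar P' = ar Pp) (hP'₂ar : ar P'₂ = ar P₂)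
    (hfresh1 : ¬ Pr.MentionsPred P') (hfresh2 : ¬ Pr.MentionsPred P'₂)
    (Pr'' : Program V C P ar)
    (hPr'' : ∀ r' : Rule V C P ar,
      r' ∈ Pr''.rules ↔
        ((r' ∈ Pr.rules ∧ r' ≠ r) ∨
         r' = ⟨some (Atom.pred P' (fun i => ts (Fin.cast hP'ar i))),
               [Atom.pred P₁ ts₁, Atom.pred P'₂ (fun i => ts₂ (Fin.cast hP'₂ar i))]⟩ ∨
         r' = ⟨some (Atom.pred P'₂ (fun i => ts₂ (Fin.cast hP'₂ar i))),
               [Atom.boxMinus ρ (Atom.pred P₂ ts₂)]⟩ ∨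
         r' = ⟨some (Atom.pred Pp ts),
               [Atom.sinc ρ' Atom.top (Atom.pred P' (fun i => ts (Fin.cast hP'ar i)))]⟩)) :
    ∀ D : Data C P ar, Data.WF D →
      ¬ Data.MentionsPred D P' → ¬ Data.MentionsPred D P'₂ →
      ∀ Q : P, Pr.MentionsPred Q →
        ∀ (qs : Fin (ar Q) → Term V C) (σ : V → C) (ι : RIntv),
          (CertainAnswer Pr D Q qs σ ι ↔ CertainAnswer Pr'' D Q qs σ ι) := by
  intro D _ hD1 hD2 Q hQ qs σ ι
  have hm : ∀ p, Pr.MentionsPred p → p ≠ P' ∧ p ≠ P'₂ := fun p hp =>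
    ⟨fun e => hfresh1 (e ▸ hp), fun e => hfresh2 (e ▸ hp)⟩
  have hPp : Pr.MentionsPred Pp := ⟨r, hrmem, Or.inr ⟨Atom.boxPlus ρ' (Atom.pred Pp ts), by rw [hr], rfl⟩⟩
  have hP1 : Pr.MentionsPred P₁ := ⟨r, hrmem, Or.inl ⟨Atom.pred P₁ ts₁, by simp [hr], rfl⟩⟩
  have hP2 : Pr.MentionsPred P₂ :=
    ⟨r, hrmem, Or.inl ⟨Atom.boxMinus ρ (Atom.pred P₂ ts₂), by simp [hr], rfl⟩⟩
  constructor
  · intro h t ht M hM ν hν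
    refine h t ht M ⟨fun r' hr' => ?_, hM.2⟩ ν hν
    by_cases e : r' = r
    · subst e
      rw [hr]
      intro ν t hb s hs
      have b1 := hb (Atom.pred P₁ ts₁) (by simp)
      have b2 := hb (Atom.boxMinus ρ (Atom.pred P₂ ts₂)) (by simp)
      have c1 := hM.1 _ ((hPr'' _).2 (Or.inr (Or.inr (Or.inl rfl)))) ν t
        (by simpa using b2)
      have c2 := hM.1 _ ((hPr'' _).2 (Or.inr (Or.inl rfl))) ν t
        (by
          intro A hA
          simp only [List.mem_cons, List.not_mem_nil, or_false] at hA
          rcases hA with rfl | rfl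
          · exact b1
          · exact c1)
      exact hM.1 _ ((hPr'' _).2 (Or.inr (Or.inr (Or.inr rfl)))) ν s
        (by
          intro A hA
          simp only [List.mem_cons, List.not_mem_nil, or_false] at hA
          subst hA
          exact ⟨t, hs, c2, fun _ _ => trivial⟩)
    · exact hM.1 r' ((hPr'' r').2 (Or.inl ⟨hr', e⟩))
  · intro h t ht M hM ν hν
    let S : (p : P) → (Fin (ar p) → M.Dom) → ℝ → Prop := fun p a t =>
      (∀ e : p = P', ∀ s, s - t ∈ ρ'.toSet →
        M.sat Pp (fun i => a (Fin.cast (by rw [e, hP'ar]) i)) s) ∧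
      (∀ e : p = P'₂, ∀ s, t - s ∈ ρ.toSet →
        M.sat P₂ (fun i => a (Fin.cast (by rw [e, hP'₂ar]) i)) s) ∧
      (p ≠ P' → p ≠ P'₂ → M.sat p a t)
    have hS : ∀ p, p ≠ P' ∧ p ≠ P'₂ → ∀ a t, S p a t ↔ M.sat p a t := fun p hp a t =>
      ⟨fun x => x.2.2 hp.1 hp.2, fun x => ⟨fun e => (hp.1 e).elim, fun e => (hp.2 e).elim,
        fun _ _ => x⟩⟩
    have hS1 : ∀ a t, S P' a t ↔ ∀ s, s - t ∈ ρ'.toSet →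
        M.sat Pp (fun i => a (Fin.cast hP'ar.symm i)) s := fun a t =>
      ⟨fun x => x.1 rfl, fun x => ⟨fun _ => x, fun e => (hne e).elim, fun e => (e rfl).elim⟩⟩
    have hS2 : ∀ a t, S P'₂ a t ↔ ∀ s, t - s ∈ ρ.toSet →
        M.sat P₂ (fun i => a (Fin.cast hP'₂ar.symm i)) s := fun a t =>
      ⟨fun x => x.2.1 rfl, fun x => ⟨fun e => (hne e.symm).elim, fun _ => x,
        fun _ e => (e rfl).elim⟩⟩
    have key : ∀ (ν : V → M.Dom) (A : Atom V C P ar),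
        (∀ p, A.mentionsPred p → Pr.MentionsPred p) →
        ∀ t, (M.withSat S).satA ν A t ↔ M.satA ν A t := fun ν A hA =>
      satA_withSat M S ν A (fun p hp => hS p (hm p (hA p hp)))
    have k1 : ∀ (ν : V → M.Dom) t, (M.withSat S).satA ν
        (Atom.pred P' (fun i => ts (Fin.cast hP'ar i))) t ↔
        M.satA ν (Atom.boxPlus ρ' (Atom.pred Pp ts)) t := by
      intro ν t
      refine Iff.trans (hS1 (fun i => Term.eval (M.withSat S) ν (ts (Fin.cast hP'ar i))) t) ?_
      refine forall_congr' fun s => imp_congr_right fun _ => ?_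
      change M.sat Pp (fun i => (Term.eval (M.withSat S) ν (ts i) : M.Dom)) s ↔ _
      simp only [eval_withSat]
      exact Iff.rfl
    have k2 : ∀ (ν : V → M.Dom) t, (M.withSat S).satA ν
        (Atom.pred P'₂ (fun i => ts₂ (Fin.cast hP'₂ar i))) t ↔
        M.satA ν (Atom.boxMinus ρ (Atom.pred P₂ ts₂)) t := by
      intro ν t
      refine Iff.trans (hS2 (fun i => Term.eval (M.withSat S) ν (ts₂ (Fin.cast hP'₂ar i))) t) ?_
      refine forall_congr' fun s => imp_congr_right fun _ => ?_
      change M.sat P₂ (fun i => (Term.eval (M.withSat S) ν (ts₂ i) : M.Dom)) s ↔ _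
      simp only [eval_withSat]
      exact Iff.rfl
    have hmod : IsModel (M.withSat S) Pr'' D := by
      constructor
      · intro r' hr'
        rcases (hPr'' r').1 hr' with ⟨h1, _⟩ | rfl | rfl | rfl
        · exact satRule_withSat M S r' (fun p hp => hS p (hm p ⟨r', h1, hp⟩)) (hM.1 r' h1)
        · intro ν t hb
          have b1 := (key ν _ (by rintro p rfl; exact hP1) t).1
            (hb (Atom.pred P₁ ts₁) (by simp))
          have b2 := (k2 ν t).1 (hb _ (by simp))
          refine (k1 ν t).2 ?_
          have hR := hM.1 r hrmem
          rw [hr] at hR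
          refine hR ν t ?_
          intro A hA
          simp only [List.mem_cons, List.not_mem_nil, or_false] at hA
          rcases hA with rfl | rfl
          · exact b1
          · exact b2
        · intro ν t hb
          exact (k2 ν t).2 ((key ν _ (by rintro p rfl; exact hP2) t).1 (hb _ (by simp)))
        · intro ν t hb
          obtain ⟨t', ht', hx, _⟩ :=
            hb (Atom.sinc ρ' Atom.top (Atom.pred P' (fun i => ts (Fin.cast hP'ar i)))) (by simp)
          exact (key ν _ (by rintro p rfl; exact hPp) t).2 ((k1 ν t').1 hx t ht')
      · intro f hf t ht
        exact (hS f.pred ⟨fun e => hD1 ⟨f, hf, e⟩, fun e => hD2 ⟨f, hf, e⟩⟩ _ t).2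
          (hM.2 f hf t ht)
    exact (key ν _ (by rintro p rfl; exact hQ) t).1 (h t ht (M.withSat S) hmod ν hν)
end

section
/- Let A, B : ℝ → Prop, let ι₁ ⊆ ℝ be an order-connected set (an interval), let ι₂ ⊆ ℝ be any set, and let ϱ ⊆ [0, ∞) be any set of nonnegative reals. Suppose A(s) holds for every s ∈ ι₁ and B(s) holds for every s ∈ ι₂. Then for every t in the topological closure of ι₁ such that there exists t′ in (closure of ι₁) ∩ ι₂ with t − t′ ∈ ϱ, the 'since' formula A S_ϱ B holds at t: there exists t″ with t − t″ ∈ ϱ, B(t″), and A(s) for all s in the open interval (t″, t). -/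
/-- Soundness of the chase rule `(S_ϱ)`: if `A` holds throughout an interval `ι₁` and `B`
throughout a set `ι₂`, then `A S_ϱ B` holds at every point `t` of the closure of `ι₁`
reachable as `t = t′ + k` with `t′ ∈ (closure ι₁) ∩ ι₂` and `k ∈ ϱ`. -/
theorem statement11 (A B : ℝ → Prop) (ι₁ : Set ℝ) (h₁ : ι₁.OrdConnected)
    (ι₂ : Set ℝ) (ϱ : Set ℝ) (hϱ : ∀ k ∈ ϱ, 0 ≤ k)
    (hA : ∀ s ∈ ι₁, A s) (hB : ∀ s ∈ ι₂, B s) :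
    ∀ t ∈ closure ι₁, (∃ t' ∈ closure ι₁ ∩ ι₂, t - t' ∈ ϱ) →
      ∃ t'' : ℝ, t - t'' ∈ ϱ ∧ B t'' ∧ ∀ s ∈ Set.Ioo t'' t, A s := by
  rintro t ht ⟨t', ⟨ht', h2⟩, hk⟩
  refine ⟨t', hk, hB t' h2, ?_⟩
  rintro s ⟨hs1, hs2⟩
  obtain ⟨a, ha, ha'⟩ := mem_closure_iff.1 ht' (Set.Iio s) isOpen_Iio hs1
  obtain ⟨b, hb, hb'⟩ := mem_closure_iff.1 ht (Set.Ioi s) isOpen_Ioi hs2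
  exact hA s (h₁.out ha' hb' ⟨le_of_lt ha, le_of_lt hb⟩)
end

section
/- Let A, B : ℝ → Prop, let ι₁ ⊆ ℝ be an order-connected set (an interval), let ι₂ ⊆ ℝ be any set, and let ϱ ⊆ [0, ∞) be any set of nonnegative reals. Suppose A(s) holds for every s ∈ ι₁ and B(s) holds for every s ∈ ι₂. Then for every t in the topological closure of ι₁ such that there exists t′ in (closure of ι₁) ∩ ι₂ with t′ − t ∈ ϱ, the 'until' formula A U_ϱ B holds at t: there exists t″ with t″ − t ∈ ϱ, B(t″), and A(s) for all s in the open interval (t, t″). -/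
/-- Soundness of the chase rule `(U_ϱ)`: if `A` holds throughout an interval `ι₁` and `B`
throughout a set `ι₂`, then `A U_ϱ B` holds at every point `t` of the closure of `ι₁`
such that `t = t′ − k` for some `t′ ∈ (closure ι₁) ∩ ι₂` and `k ∈ ϱ`. -/
theorem statement12 (A B : ℝ → Prop) (ι₁ : Set ℝ) (h₁ : ι₁.OrdConnected)
    (ι₂ : Set ℝ) (ϱ : Set ℝ) (hϱ : ∀ k ∈ ϱ, 0 ≤ k)
    (hA : ∀ s ∈ ι₁, A s) (hB : ∀ s ∈ ι₂, B s) :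
    ∀ t ∈ closure ι₁, (∃ t' ∈ closure ι₁ ∩ ι₂, t' - t ∈ ϱ) →
      ∃ t'' : ℝ, t'' - t ∈ ϱ ∧ B t'' ∧ ∀ s ∈ Set.Ioo t t'', A s := by
  rintro t ht ⟨t', ⟨ht', hι⟩, hk⟩
  refine ⟨t', hk, hB _ hι, fun s hs => hA s ?_⟩
  obtain ⟨a, ha, ha'⟩ := mem_closure_iff.1 ht (Set.Iio s) isOpen_Iio hs.1
  obtain ⟨b, hb, hb'⟩ := mem_closure_iff.1 ht' (Set.Ioi s) isOpen_Ioi hs.2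
  exact h₁.out ha' hb' ⟨le_of_lt ha, le_of_lt hb⟩
end
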